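/- Let 𝔤 be a finite-dimensional real Lie algebra whose derived algebra [𝔤,𝔤] is a proper subspace of 𝔤, let α be an inner product on 𝔤 and let V ∈ 𝔤 satisfy α(V,V) < 1. Then for any hyperplane W ⊂ 𝔤 containing [𝔤,𝔤] there exist geodesic vectors n₁, n₂ for (α, V) lying strictly on opposite sides of W; in particular, 𝔤 admits at least two geodesic vectors neither of which is a positive scalar multiple of the other. -/

import Mathlib

/-- A nonzero `X` is a geodesic vector for the data `(α, V)` of a left-invariant
Randers metric if `α (X + √(α X X) • V) ⁅X, U⁆ = 0` for all `U`. -/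
def IsGeodesicVector {L : Type*} [LieRing L] [LieAlgebra ℝ L]
    (α : L →ₗ[ℝ] L →ₗ[ℝ] ℝ) (V X : L) : Prop :=
  X ≠ 0 ∧ ∀ U : L, α (X + Real.sqrt (α X X) • V) ⁅X, U⁆ = 0

/-!
For a unit vector `X`, the geodesic condition says that `X + V` is orthogonal to `⁅X, 𝔤⁆`.
Represent a functional `φ` with kernel `W ⊇ [𝔤, 𝔤]` as `α N`. It then suffices that `X` is a unit
vector on the line `-V + ℝ N`. Since `|V| < 1`, the point `-V` of this line is inside the unit
ball, so the line meets the unit sphere twice, and the two intersection points lie on opposite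
sides of the orthogonal projection of the origin to the line, which is in `W`.
-/

lemma exists_ne_zero_ker_eq_of_finrank_quotient_eq_one {K E : Type*} [DivisionRing K]
    [AddCommGroup E] [Module K E] {W : Submodule K E} (hW : Module.finrank K (E ⧸ W) = 1) :
    ∃ φ : E →ₗ[K] K, φ ≠ 0 ∧ LinearMap.ker φ = W := by
  obtain ⟨e⟩ := Module.nonempty_linearEquiv_of_finrank_eq_one hW
  refine ⟨e.symm.toLinearMap ∘ₗ W.mkQ, ?_, by rw [LinearEquiv.ker_comp, Submodule.ker_mkQ]⟩
  have hsurj : Function.Surjective (e.symm.toLinearMap ∘ₗ W.mkQ) :=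
    e.symm.surjective.comp W.mkQ_surjective
  intro h
  simpa [h] using hsurj 1

lemma surjective_of_anisotropic {K E : Type*} [Field K] [AddCommGroup E] [Module K E]
    [FiniteDimensional K E] {α : E →ₗ[K] E →ₗ[K] K} (hα : ∀ x, α x x = 0 → x = 0) :
    Function.Surjective α := by
  have hinj : Function.Injective α :=
    (injective_iff_map_eq_zero α).2 fun x hx => hα x (by rw [hx, LinearMap.zero_apply])
  exact (LinearMap.injective_iff_surjective_of_finrank_eq_finrank
    Subspace.dual_finrank_eq.symm).1 hinj

lemma ne_smul_of_apply_mul_apply_neg {K E : Type*} [Field K] [LinearOrder K]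
    [IsStrictOrderedRing K] [AddCommGroup E] [Module K E] {φ : E →ₗ[K] K} {x y : E} {t : K}
    (hxy : φ x * φ y < 0) (ht : 0 ≤ t) : x ≠ t • y := by
  rintro rfl
  have hnonneg : 0 ≤ t * (φ y * φ y) := mul_nonneg ht (mul_self_nonneg _)
  rw [map_smul, smul_eq_mul, mul_assoc] at hxy
  exact hxy.not_ge hnonneg

lemma exists_unit_add_eq_smul {E : Type*} [AddCommGroup E] [Module ℝ E]
    {α : E →ₗ[ℝ] E →ₗ[ℝ] ℝ} (hsymm : ∀ x y, α x y = α y x) {V N : E} (hV : α V V < 1)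
    (hN : 0 < α N N) :
    ∃ (X : E) (r : ℝ), α X X = 1 ∧ X + V = r • N ∧ 0 < α N X := by
  have hdisc : 0 < α N V ^ 2 + α N N * (1 - α V V) :=
    add_pos_of_nonneg_of_pos (sq_nonneg _) (mul_pos hN (sub_pos.2 hV))
  obtain ⟨s, hs, hs2⟩ : ∃ s : ℝ, 0 < s ∧ s ^ 2 = α N V ^ 2 + α N N * (1 - α V V) :=
    ⟨_, Real.sqrt_pos.2 hdisc, Real.sq_sqrt hdisc.le⟩
  -- `r` is the larger root of `α (r • N - V) (r • N - V) = 1`.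
  set r : ℝ := (α N V + s) / α N N
  have hr : r * α N N = α N V + s := div_mul_cancel₀ _ hN.ne'
  have happly : α N (r • N - V) = s := by
    rw [map_sub, map_smul, smul_eq_mul, hr, add_sub_cancel_left]
  refine ⟨r • N - V, r, mul_left_cancel₀ hN.ne' ?_, sub_add_cancel _ _, happly ▸ hs⟩
  simp only [map_sub, map_smul, LinearMap.sub_apply, LinearMap.smul_apply, smul_eq_mul, hsymm V N]
  linear_combination hs2 + (r * α N N - α N V + s) * hr

section GeodesicVector

variable {L : Type*} [LieRing L] [LieAlgebra ℝ L] {α : L →ₗ[ℝ] L →ₗ[ℝ] ℝ} {V : L}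

lemma isGeodesicVector_iff_of_unit {X : L} (hX : α X X = 1) :
    IsGeodesicVector α V X ↔ ∀ U : L, α (X + V) ⁅X, U⁆ = 0 := by
  have hne : X ≠ 0 := by
    rintro rfl
    simp at hX
  rw [IsGeodesicVector, hX, Real.sqrt_one, one_smul, and_iff_right hne]

lemma exists_isGeodesicVector_apply_pos [FiniteDimensional ℝ L] (hsymm : ∀ x y, α x y = α y x)
    (hpos : ∀ x, x ≠ 0 → 0 < α x x) (hV : α V V < 1) {φ : L →ₗ[ℝ] ℝ} (hφ : φ ≠ 0)
    (hbracket : ∀ x y : L, φ ⁅x, y⁆ = 0) :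
    ∃ X : L, IsGeodesicVector α V X ∧ 0 < φ X := by
  have hanis : ∀ x, α x x = 0 → x = 0 := fun x hx => by_contra fun hne => (hpos x hne).ne' hx
  obtain ⟨N, rfl⟩ := surjective_of_anisotropic hanis φ
  have hN : N ≠ 0 := fun h => hφ (by rw [h, map_zero])
  obtain ⟨X, r, hunit, hadd, hNX⟩ := exists_unit_add_eq_smul hsymm hV (hpos N hN)
  refine ⟨X, (isGeodesicVector_iff_of_unit hunit).2 fun U => ?_, hNX⟩
  rw [hadd, map_smul, LinearMap.smul_apply, hbracket, smul_zero]

end GeodesicVector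

/-- if the derived algebra [𝔤,𝔤] of a finite-dimensional real Lie
algebra 𝔤 is a proper subspace, then for any hyperplane W containing [𝔤,𝔤] there
are geodesic vectors n₁, n₂ for (α, V) strictly on opposite sides of W; in
particular neither is a positive scalar multiple of the other. -/
theorem two_geodesic_vectors_of_proper_derived
    (L : Type*) [LieRing L] [LieAlgebra ℝ L] [FiniteDimensional ℝ L]
    (α : L →ₗ[ℝ] L →ₗ[ℝ] ℝ)
    (hsymm : ∀ x y, α x y = α y x)
    (hpos : ∀ x, x ≠ 0 → 0 < α x x)
    (V : L) (hV : α V V < 1)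
    (hproper : Submodule.span ℝ {z : L | ∃ x y : L, ⁅x, y⁆ = z} ≠ ⊤)
    (W : Submodule ℝ L)
    (hWcodim : Module.finrank ℝ (L ⧸ W) = 1)
    (hWbrackets : ∀ x y : L, ⁅x, y⁆ ∈ W) :
    ∃ (n₁ n₂ : L) (φ : L →ₗ[ℝ] ℝ),
      LinearMap.ker φ = W ∧ 0 < φ n₁ ∧ φ n₂ < 0 ∧
      IsGeodesicVector α V n₁ ∧ IsGeodesicVector α V n₂ ∧
      (∀ t : ℝ, 0 < t → n₁ ≠ t • n₂) ∧ (∀ t : ℝ, 0 < t → n₂ ≠ t • n₁) := by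
  obtain ⟨φ, hφ, hker⟩ := exists_ne_zero_ker_eq_of_finrank_quotient_eq_one hWcodim
  have hbracket (x y : L) : φ ⁅x, y⁆ = 0 := by
    rw [← LinearMap.mem_ker, hker]
    exact hWbrackets x y
  obtain ⟨n₁, hn₁, h₁⟩ := exists_isGeodesicVector_apply_pos hsymm hpos hV hφ hbracket
  obtain ⟨n₂, hn₂, h₂⟩ :=
    exists_isGeodesicVector_apply_pos hsymm hpos hV (neg_ne_zero.2 hφ)
      fun x y => by rw [LinearMap.neg_apply, hbracket, neg_zero]
  have h₂ : φ n₂ < 0 := by rwa [LinearMap.neg_apply, neg_pos] at h₂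
  exact ⟨n₁, n₂, φ, hker, h₁, h₂, hn₁, hn₂,
    fun _ ht => ne_smul_of_apply_mul_apply_neg (mul_neg_of_pos_of_neg h₁ h₂) ht.le,
    fun _ ht => ne_smul_of_apply_mul_apply_neg (mul_neg_of_neg_of_pos h₂ h₁) ht.le⟩
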